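/- arXiv:1607.04888 — 3 statements merged into one kernel-verified Lean document; each statement's English description precedes it below -/
import Mathlib

section
/- There exists a threshold N such that the following holds for all integers r, h ≥ N satisfying min{r+1, h} ≥ 10·(ln max{r+1, h})². Let A be a finite nonempty subset of an abelian group, let K be a real number with |A+A| = K·|A|, and let λ₁, …, λ_h be nonzero integers with |λᵢ| ≤ 2^r for every i. Then |λ₁·A + λ₂·A + … + λ_h·A| ≤ K^(7rh/ln(r+h)) · |A|. -/
open Pointwise

/-- The dilate `λ · A = {λa : a ∈ A}` of a finite set in an abelian group. -/
def dilate {G : Type} [AddCommGroup G] [DecidableEq G] (l : ℤ) (A : Finset G) : Finset G :=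
  A.image fun a => l • a

section helpers
open Finset

/-- Ruzsa covering combined with Pluennecke. -/
lemma cover_nsmul {G : Type} [AddCommGroup G] [DecidableEq G] {A : Finset G} {K : ℝ}
    (hA : A.Nonempty) (hK : ((A + A).card : ℝ) = K * A.card) (s t : ℕ) :
    ∃ T : Finset G, (T.card : ℝ) ≤ K ^ (s + t + 1) ∧ s • A - t • A ⊆ T + (A - A) := by
  have hpos : (0 : ℝ) < A.card := by exact_mod_cast hA.card_pos
  have hKe : K = ((A + A).card : ℝ) / A.card := by field_simp; linarith
  have hP := Finset.pluennecke_ruzsa_inequality_nsmul_sub_nsmul_add hA A (s + 1) t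
  have hP' : (((s + 1) • A - t • A).card : ℝ) ≤ K ^ (s + 1 + t) * A.card := by
    rw [hKe]
    have h2 := (NNRat.cast_le (K := ℝ)).2 hP
    push_cast at h2
    exact h2
  have he : (s • A - t • A) + A = (s + 1) • A - t • A := by
    rw [succ_nsmul, sub_add_eq_add_sub]
  obtain ⟨F, -, hF, hc⟩ := Finset.ruzsa_covering_add (A := s • A - t • A) (B := A)
    (K := K ^ (s + t + 1)) hA (by
      rw [he]
      convert hP' using 3
      ring)
  exact ⟨F, hF, hc⟩

lemma card_sub_le {G : Type} [AddCommGroup G] [DecidableEq G] {A : Finset G} {K : ℝ}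
    (hA : A.Nonempty) (hK : ((A + A).card : ℝ) = K * A.card) :
    ((A - A).card : ℝ) ≤ K ^ 2 * A.card := by
  have hpos : (0 : ℝ) < A.card := by exact_mod_cast hA.card_pos
  have hKe : K = ((A + A).card : ℝ) / A.card := by field_simp; linarith
  have hP := Finset.pluennecke_ruzsa_inequality_nsmul_sub_nsmul_add hA A 1 1
  have hP' : ((1 • A - 1 • A).card : ℝ) ≤ K ^ (1 + 1) * A.card := by
    rw [hKe]
    have h2 := (NNRat.cast_le (K := ℝ)).2 hP
    push_cast at h2
    exact h2
  simpa using hP'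

lemma sum_mem_card_nsmul {G κ : Type} [AddCommGroup G] [DecidableEq G] {D : Finset G}
    (Q : Finset κ) (d : κ → G) (hd : ∀ q ∈ Q, d q ∈ D) : ∑ q ∈ Q, d q ∈ Q.card • D := by
  classical
  induction Q using Finset.induction_on with
  | empty => simp
  | insert a s ha ih =>
    rw [Finset.sum_insert ha, Finset.card_insert_of_notMem ha, succ_nsmul, add_comm (d a)]
    exact Finset.add_mem_add (ih fun q hq => hd q (Finset.mem_insert_of_mem hq))
      (hd a (Finset.mem_insert_self _ _))

/-- Sums of signed elements. -/
lemma signed_cover {G ι : Type} [AddCommGroup G] [DecidableEq G] {A : Finset G} {K : ℝ}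
    (hA : A.Nonempty) (hK : ((A + A).card : ℝ) = K * A.card) (X : Finset ι) (σ : ι → ℤ)
    (hσ : ∀ i, σ i = 1 ∨ σ i = -1) :
    ∃ T : Finset G, (T.card : ℝ) ≤ K ^ (X.card + 1) ∧
      ∀ a : ι → G, (∀ i, a i ∈ A) → ∑ i ∈ X, σ i • a i ∈ T + (A - A) := by
  classical
  obtain ⟨T, hT, hc⟩ := cover_nsmul hA hK (X.filter fun i => σ i = 1).card
    (X.filter fun i => ¬ σ i = 1).card
  rw [Finset.card_filter_add_card_filter_not] at hT
  refine ⟨T, hT, fun a ha => hc ?_⟩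
  rw [← Finset.sum_filter_add_sum_filter_not X (fun i => σ i = 1)]
  have h1 : ∑ i ∈ X with σ i = 1, σ i • a i = ∑ i ∈ X with σ i = 1, a i :=
    Finset.sum_congr rfl fun i hi => by simp [(Finset.mem_filter.1 hi).2]
  have h2 : ∑ i ∈ X with ¬ σ i = 1, σ i • a i = - ∑ i ∈ X with ¬ σ i = 1, a i := by
    rw [← Finset.sum_neg_distrib]
    refine Finset.sum_congr rfl fun i hi => ?_
    have := (hσ i).resolve_left (Finset.mem_filter.1 hi).2
    simp [this]
  rw [h1, h2, ← sub_eq_add_neg]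
  exact Finset.sub_mem_sub (sum_mem_card_nsmul _ _ fun q _ => ha q)
    (sum_mem_card_nsmul _ _ fun q _ => ha q)

/-- Horner-type covering. -/
lemma horner_cover {G : Type} [AddCommGroup G] [DecidableEq G] {A : Finset G} {K : ℝ}
    (hA : A.Nonempty) (hK : ((A + A).card : ℝ) = K * A.card) (hK1 : 1 ≤ K) (m : ℕ) :
    ∀ n : ℕ → ℕ, ∃ T : Finset G, (T.card : ℝ) ≤ K ^ (∑ j ∈ range m, (2 * n j + 5)) ∧
      ∀ y : ℕ → G, (∀ j, y j ∈ n j • (A - A)) →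
        ∑ j ∈ range m, 2 ^ j • y j ∈ T + (A - A) := by
  have h0 : (0 : G) ∈ A - A := by
    obtain ⟨a, ha⟩ := hA
    exact Finset.mem_sub.2 ⟨a, ha, a, ha, sub_self a⟩
  induction m with
  | zero =>
    intro n
    exact ⟨{0}, by simp, fun y _ =>
      Finset.mem_add.2 ⟨0, Finset.mem_singleton_self 0, 0, h0, by simp⟩⟩
  | succ m ih =>
    intro n
    obtain ⟨T, hT, hc⟩ := ih fun j => n (j + 1)
    obtain ⟨T', hT', hc'⟩ := cover_nsmul hA hK (n 0 + 2) (n 0 + 2)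
    refine ⟨T.image (fun t => 2 • t) + T', ?_, ?_⟩
    · rw [Finset.sum_range_succ', pow_add]
      calc ((T.image (fun t => 2 • t) + T').card : ℝ)
          ≤ (((T.image (fun t => 2 • t)).card * T'.card : ℕ) : ℝ) := by
            exact_mod_cast Finset.card_add_le
        _ ≤ ((T.card * T'.card : ℕ) : ℝ) := by
            exact_mod_cast Nat.mul_le_mul_right _ Finset.card_image_le
        _ = (T.card : ℝ) * T'.card := by push_cast; rfl
        _ ≤ _ := by
            have e : 2 * n 0 + 5 = n 0 + 2 + (n 0 + 2) + 1 := by ring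
            rw [e]
            exact mul_le_mul hT hT' (by positivity) (by positivity)
    · intro y hy
      obtain ⟨t, ht, d, hd, htd⟩ := Finset.mem_add.1 (hc (fun j => y (j + 1)) fun j => hy (j + 1))
      have e : ∑ j ∈ range (m + 1), 2 ^ j • y j = 2 • t + (y 0 + (d + d)) := by
        rw [Finset.sum_range_succ']
        have : ∑ k ∈ range m, 2 ^ (k + 1) • y (k + 1) = 2 • (t + d) := by
          rw [htd, Finset.smul_sum]
          refine Finset.sum_congr rfl fun k _ => ?_
          rw [smul_smul, pow_succ']
        rw [this, pow_zero, one_smul, two_nsmul, two_nsmul]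
        abel
      rw [e, add_assoc]
      refine Finset.add_mem_add (Finset.mem_image_of_mem _ ht) (hc' ?_)
      rw [← nsmul_sub, add_nsmul, two_nsmul]
      exact Finset.add_mem_add (hy 0) (Finset.add_mem_add hd hd)

/-- The main covering bound in terms of a biclique decomposition. -/
lemma biclique_bound {G κ : Type} [AddCommGroup G] [DecidableEq G] {A : Finset G}
    {K : ℝ} (hA : A.Nonempty) (hK : ((A + A).card : ℝ) = K * A.card) (hK1 : 1 ≤ K)
    {h m : ℕ} (Q : Finset κ) (X : κ → Finset (Fin h)) (Y : κ → Finset (Fin m))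
    (lam σ : Fin h → ℤ) (hσ : ∀ i, σ i = 1 ∨ σ i = -1)
    (hlam : ∀ i, lam i = σ i * ∑ j : Fin m, 2 ^ (j : ℕ) *
      ∑ q ∈ Q, if i ∈ X q ∧ j ∈ Y q then 1 else 0) :
    ((∑ i, dilate (lam i) A).card : ℝ) ≤
      K ^ (∑ q ∈ Q, ((X q).card + 1 + 2 * (Y q).card) + 5 * m + 2) * A.card := by
  classical
  choose T hT hTc using fun q => signed_cover hA hK (X q) σ hσ
  let n : ℕ → ℕ := fun j => if hj : j < m then (Q.filter fun q => (⟨j, hj⟩ : Fin m) ∈ Y q).card else 0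
  obtain ⟨U, hU, hUc⟩ := horner_cover hA hK hK1 m n
  let γ : κ → ℕ := fun q => ∑ j ∈ Y q, 2 ^ (j : ℕ)
  let V : Finset G := (Fintype.piFinset fun q : Q => T q).image fun t => ∑ q : Q, γ q • t q
  have hn : ∑ j ∈ range m, (2 * n j + 5) = 2 * ∑ q ∈ Q, (Y q).card + 5 * m := by
    rw [Finset.sum_add_distrib, ← Finset.mul_sum]
    congr 1
    · congr 1
      rw [← Fin.sum_univ_eq_sum_range]
      have : ∀ j : Fin m, n j = ∑ q ∈ Q, if j ∈ Y q then 1 else 0 := by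
        intro j
        simp [n]
      simp_rw [this]
      rw [Finset.sum_comm]
      simp
    · simp [mul_comm]
  have hsub : ∑ i, dilate (lam i) A ⊆ V + U + (A - A) := by
    intro x hx
    obtain ⟨b, hb, rfl⟩ : ∃ b : Fin h → G, (∀ i, b i ∈ dilate (lam i) A) ∧ ∑ i, b i = x := by
      have hx' : x ∈ ((∑ i, dilate (lam i) A : Finset G) : Set G) := hx
      rw [Finset.coe_sum] at hx'
      obtain ⟨b, hb, hbx⟩ := (Set.mem_finsetSum _ _ _).1 hx'
      exact ⟨b, fun i => hb (Finset.mem_univ i), hbx⟩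
    have hb' : ∀ i, ∃ a ∈ A, lam i • a = b i := fun i => by simpa [dilate] using hb i
    choose a ha hab using hb'
    have hd : ∀ q, ∃ t ∈ T q, ∃ d ∈ A - A, t + d = ∑ i ∈ X q, σ i • a i :=
      fun q => Finset.mem_add.1 (hTc q a ha)
    choose t ht d hd htd using hd
    have hsum : ∑ i, b i = ∑ q ∈ Q, γ q • (∑ i ∈ X q, σ i • a i) := by
      have e1 : ∀ i, b i = ∑ q ∈ Q, if i ∈ X q then γ q • σ i • a i else 0 := by
        intro i
        have e2 : lam i = ∑ q ∈ Q, if i ∈ X q then (γ q : ℤ) * σ i else 0 := by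
          rw [hlam i]
          simp_rw [Finset.mul_sum]
          rw [Finset.sum_comm]
          refine Finset.sum_congr rfl fun q _ => ?_
          by_cases hi : i ∈ X q
          · simp [hi, γ, ← Finset.mul_sum, mul_comm]
          · simp [hi]
        rw [← hab i, e2, Finset.sum_smul]
        refine Finset.sum_congr rfl fun q _ => ?_
        by_cases hi : i ∈ X q
        · simp only [hi, if_true]
          rw [mul_smul, natCast_zsmul]
        · simp [hi]
      simp_rw [e1]
      rw [Finset.sum_comm]
      refine Finset.sum_congr rfl fun q _ => ?_
      rw [Finset.smul_sum, Finset.sum_ite_mem, Finset.univ_inter]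
    have hD : ∑ q ∈ Q, γ q • d q = ∑ j ∈ range m, 2 ^ j •
        (if hj : j < m then ∑ q ∈ Q.filter (fun q => (⟨j, hj⟩ : Fin m) ∈ Y q), d q else 0) := by
      rw [← Fin.sum_univ_eq_sum_range (fun j => 2 ^ j •
        (if hj : j < m then ∑ q ∈ Q.filter (fun q => (⟨j, hj⟩ : Fin m) ∈ Y q), d q else 0))]
      simp only [Fin.is_lt, dite_true, Fin.eta, Finset.smul_sum, Finset.sum_filter, γ,
        Finset.sum_smul]
      rw [Finset.sum_comm]
      refine Finset.sum_congr rfl fun q _ => ?_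
      simp [Finset.sum_ite_mem]
    rw [hsum]
    simp_rw [← htd, smul_add]
    rw [Finset.sum_add_distrib, add_assoc]
    refine Finset.add_mem_add ?_ ?_
    · refine Finset.mem_image.2 ⟨fun q => t q, Fintype.mem_piFinset.2 fun q => ht q, ?_⟩
      exact Finset.sum_coe_sort Q (fun q => γ q • t q)
    · rw [hD]
      refine hUc _ fun j => ?_
      by_cases hj : j < m
      · simp only [hj, dite_true, n]
        exact sum_mem_card_nsmul _ _ fun q _ => hd q
      · simp [hj, n]
  have hV : (V.card : ℝ) ≤ K ^ (∑ q ∈ Q, ((X q).card + 1)) := by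
    calc (V.card : ℝ) ≤ ((Fintype.piFinset fun q : Q => T q).card : ℝ) := by
          exact_mod_cast Finset.card_image_le
      _ = ∏ q ∈ Q, ((T q).card : ℝ) := by
          rw [Fintype.card_piFinset]
          push_cast
          exact Finset.prod_coe_sort Q (fun q => ((T q).card : ℝ))
      _ ≤ ∏ q ∈ Q, K ^ ((X q).card + 1) := by
          gcongr with q
          exact hT q
      _ = _ := by rw [Finset.prod_pow_eq_pow_sum]
  calc ((∑ i, dilate (lam i) A).card : ℝ) ≤ ((V + U + (A - A)).card : ℝ) := by
        exact_mod_cast Finset.card_le_card hsub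
    _ ≤ ((V.card * U.card * (A - A).card : ℕ) : ℝ) := by
        exact_mod_cast Finset.card_add_le.trans (Nat.mul_le_mul_right _ Finset.card_add_le)
    _ = (V.card : ℝ) * U.card * (A - A).card := by push_cast; rfl
    _ ≤ K ^ (∑ q ∈ Q, ((X q).card + 1)) * K ^ (∑ j ∈ range m, (2 * n j + 5)) *
        (K ^ 2 * A.card) := by
        gcongr
        exact card_sub_le hA hK
    _ = _ := by
        rw [hn, Finset.sum_add_distrib (f := fun q => (X q).card + 1), ← Finset.mul_sum]
        ring

/-- Biclique decompositions via blocks of size `k`. -/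
lemma exists_biclique (s L k : ℕ) (hk : 0 < k) (R : Fin s → Fin L → Prop) :
    ∃ (Q : Finset (ℕ × Finset (Fin s))) (C : ℕ × Finset (Fin s) → Finset (Fin L)),
      (∀ a c, (R a c → (∑ q ∈ Q, if a ∈ q.2 ∧ c ∈ C q then 1 else 0 : ℤ) = 1) ∧
        (¬ R a c → (∑ q ∈ Q, if a ∈ q.2 ∧ c ∈ C q then 1 else 0 : ℤ) = 0)) ∧
      Q.card ≤ (s / k + 1) * 2 ^ k ∧
      ∑ q ∈ Q, q.2.card ≤ (s / k + 1) * (k * 2 ^ k) ∧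
      ∑ q ∈ Q, (C q).card ≤ (s / k + 1) * L := by
  classical
  let F : ℕ → Finset (Fin s) := fun b => univ.filter fun a => (a : ℕ) / k = b
  have hF : ∀ b, (F b).card ≤ k := by
    intro b
    have : ((F b).image fun a : Fin s => (a : ℕ) % k) ⊆ range k := by
      intro x hx
      obtain ⟨a, -, rfl⟩ := Finset.mem_image.1 hx
      exact Finset.mem_range.2 (Nat.mod_lt _ hk)
    have h2 := Finset.card_le_card this
    rw [Finset.card_image_of_injOn, Finset.card_range] at h2
    · exact h2
    · intro x hx y hy hxy
      simp only [F, Finset.coe_filter, Finset.mem_univ, true_and, Set.mem_ofPred_eq] at hx hy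
      simp only at hxy
      have := Nat.div_add_mod (x : ℕ) k
      have := Nat.div_add_mod (y : ℕ) k
      ext
      rw [hx, hxy] at *
      rw [hy] at *
      omega
  let Q := (range (s / k + 1)).biUnion fun b => (F b).powerset.image fun P => (b, P)
  let tr : ℕ → Fin L → Finset (Fin s) := fun b c => (F b).filter fun a => R a c
  let C : ℕ × Finset (Fin s) → Finset (Fin L) := fun q => univ.filter fun c => tr q.1 c = q.2
  have hmem : ∀ q, q ∈ Q ↔ q.1 < s / k + 1 ∧ q.2 ⊆ F q.1 := by
    rintro ⟨b, P⟩
    simp only [Q, Finset.mem_biUnion, Finset.mem_image, Finset.mem_powerset, Finset.mem_range,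
      Prod.mk.injEq]
    constructor
    · rintro ⟨b, hb, P, hP, rfl, rfl⟩
      exact ⟨hb, hP⟩
    · rintro ⟨hb, hP⟩
      exact ⟨b, hb, P, hP, rfl, rfl⟩
  have hQ : Q.card ≤ (s / k + 1) * 2 ^ k := by
    refine (Finset.card_biUnion_le_card_mul _ _ (2 ^ k) fun b _ => ?_).trans (by simp)
    refine Finset.card_image_le.trans ?_
    rw [Finset.card_powerset]
    exact Nat.pow_le_pow_right (by norm_num) (hF b)
  refine ⟨Q, C, fun a c => ⟨fun hR => ?_, fun hR => ?_⟩, hQ, ?_, ?_⟩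
  · rw [Finset.sum_eq_single ((a : ℕ) / k, tr ((a : ℕ) / k) c)]
    · simp [C, tr, F, hR]
    · rintro ⟨b, P⟩ hq hne
      rw [if_neg]
      rintro ⟨h1, h2⟩
      apply hne
      have h3 := ((hmem _).1 hq).2 h1
      simp only [F, Finset.mem_filter, Finset.mem_univ, true_and] at h3
      simp only [C, Finset.mem_filter, Finset.mem_univ, true_and] at h2
      rw [h3, h2]
    · intro hq
      exfalso
      apply hq
      rw [hmem]
      refine ⟨Nat.lt_succ_of_le (Nat.div_le_div_right a.2.le), Finset.filter_subset _ _⟩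
  · refine Finset.sum_eq_zero fun q hq => ?_
    rw [if_neg]
    rintro ⟨h1, h2⟩
    simp only [C, Finset.mem_filter, Finset.mem_univ, true_and] at h2
    rw [← h2] at h1
    exact hR (Finset.mem_filter.1 h1).2
  · calc ∑ q ∈ Q, q.2.card ≤ ∑ q ∈ Q, k :=
          Finset.sum_le_sum fun q hq => (Finset.card_le_card ((hmem q).1 hq).2).trans (hF _)
      _ = Q.card * k := by simp
      _ ≤ (s / k + 1) * 2 ^ k * k := Nat.mul_le_mul_right _ hQ
      _ = _ := by ring
  · have e : ∀ q ∈ Q, (C q).card = ∑ c : Fin L, if tr q.1 c = q.2 then 1 else 0 := by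
      intro q _
      simp [C]
    rw [Finset.sum_congr rfl e, Finset.sum_comm]
    calc ∑ c : Fin L, ∑ q ∈ Q, (if tr q.1 c = q.2 then 1 else 0)
        ≤ ∑ c : Fin L, (s / k + 1) := by
          refine Finset.sum_le_sum fun c _ => ?_
          rw [← Finset.card_filter]
          rw [← Finset.card_range (s / k + 1)]
          refine Finset.card_le_card_of_injOn Prod.fst ?_ ?_
          · intro q hq
            have := (hmem q).1 (Finset.mem_filter.1 hq).1
            simpa using this.1
          · intro q hq q' hq' hqq
            have h1 := (Finset.mem_filter.1 hq).2
            have h2 := (Finset.mem_filter.1 hq').2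
            refine Prod.ext hqq ?_
            rw [← h1, ← h2, hqq]
      _ = _ := by simp [mul_comm]

lemma binary_sum (n m : ℕ) : ∑ j ∈ range m, 2 ^ j * (n / 2 ^ j % 2) = n % 2 ^ m := by
  induction m with
  | zero => simp [Nat.mod_one]
  | succ m ih => rw [Finset.sum_range_succ, ih, Nat.mod_pow_succ]

/-- Combinatorial bound. -/
lemma combined_bound {G : Type} [AddCommGroup G] [DecidableEq G] {A : Finset G}
    {K : ℝ} (hA : A.Nonempty) (hK : ((A + A).card : ℝ) = K * A.card) (hK1 : 1 ≤ K)
    (r h k : ℕ) (hk : 0 < k) (lam : Fin h → ℤ) (hlam : ∀ i, |lam i| ≤ 2 ^ r) :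
    ((∑ i, dilate (lam i) A).card : ℝ) ≤
      K ^ ((min (r + 1) h / k + 1) * (2 * max (r + 1) h + (2 * k + 1) * 2 ^ k)
        + 5 * max (r + 1) h + 2) * A.card := by
  classical
  let R : Fin h → Fin (r + 1) → Prop := fun i j => (lam i).natAbs / 2 ^ (j : ℕ) % 2 = 1
  let σ : Fin h → ℤ := fun i => if 0 ≤ lam i then 1 else -1
  have hσ : ∀ i, σ i = 1 ∨ σ i = -1 := fun i => by
    by_cases h0 : 0 ≤ lam i <;> simp [σ, h0]
  have hdec : ∀ i, lam i = σ i * ∑ j : Fin (r + 1), 2 ^ (j : ℕ) * (if R i j then 1 else 0) := by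
    intro i
    have h1 : ((lam i).natAbs : ℤ) =
        ∑ j : Fin (r + 1), 2 ^ (j : ℕ) * (if R i j then 1 else 0) := by
      have hlt : (lam i).natAbs < 2 ^ (r + 1) := by
        have := hlam i
        rw [Int.abs_eq_natAbs] at this
        have h2 : (lam i).natAbs ≤ 2 ^ r := by exact_mod_cast this
        rw [pow_succ]
        have : 0 < 2 ^ r := by positivity
        omega
      have h2 := binary_sum (lam i).natAbs (r + 1)
      rw [Nat.mod_eq_of_lt hlt, ← Fin.sum_univ_eq_sum_range
        (fun j => 2 ^ j * ((lam i).natAbs / 2 ^ j % 2))] at h2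
      conv_lhs => rw [← h2]
      rw [Nat.cast_sum]
      refine Finset.sum_congr rfl fun j _ => ?_
      simp only [R]
      rcases Nat.mod_two_eq_zero_or_one ((lam i).natAbs / 2 ^ (j : ℕ)) with h3 | h3
      · rw [h3]; simp
      · rw [h3]; simp
    rw [← h1]
    by_cases h0 : 0 ≤ lam i
    · simp [σ, h0, abs_of_nonneg h0]
    · simp [σ, h0, abs_of_neg (not_le.1 h0)]
  rcases le_total (r + 1) h with hle | hle
  · rw [min_eq_left hle, max_eq_right hle]
    obtain ⟨Q, C, hR, h1, h2, h3⟩ := exists_biclique (r + 1) h k hk fun j i => R i j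
    refine (biclique_bound hA hK hK1 Q C (fun q => q.2) lam σ hσ ?_).trans ?_
    · intro i
      rw [hdec i]
      congr 1
      refine Finset.sum_congr rfl fun j _ => ?_
      congr 1
      have := hR j i
      simp_rw [and_comm (a := i ∈ _)]
      by_cases hh : R i j
      · rw [this.1 hh, if_pos hh]
      · rw [this.2 hh, if_neg hh]
    · refine mul_le_mul_of_nonneg_right (pow_le_pow_right₀ hK1 ?_) (Nat.cast_nonneg _)
      rw [Finset.sum_add_distrib, Finset.sum_add_distrib, ← Finset.mul_sum, Finset.sum_const,
        smul_eq_mul, mul_one]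
      nlinarith [Nat.zero_le ((r + 1) / k * h)]
  · rw [min_eq_right hle, max_eq_left hle]
    obtain ⟨Q, C, hR, h1, h2, h3⟩ := exists_biclique h (r + 1) k hk R
    refine (biclique_bound hA hK hK1 Q (fun q => q.2) C lam σ hσ ?_).trans ?_
    · intro i
      rw [hdec i]
      congr 1
      refine Finset.sum_congr rfl fun j _ => ?_
      congr 1
      have := hR i j
      by_cases hh : R i j
      · rw [this.1 hh, if_pos hh]
      · rw [this.2 hh, if_neg hh]
    · refine mul_le_mul_of_nonneg_right (pow_le_pow_right₀ hK1 ?_) (Nat.cast_nonneg _)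
      rw [Finset.sum_add_distrib, Finset.sum_add_distrib, ← Finset.mul_sum, Finset.sum_const,
        smul_eq_mul, mul_one]
      have : 0 ≤ (h / k + 1) * (k * 2 ^ k) := Nat.zero_le _
      nlinarith

/-- The numerical estimate. -/
lemma numeric_bound (r h : ℕ) (s L : ℕ) (hs : s = min (r + 1) h) (hL : L = max (r + 1) h)
    (hr : 100 ≤ Real.log r) (hh : 100 ≤ Real.log h)
    (hmin : 10 * Real.log L ^ 2 ≤ s) :
    ∃ k : ℕ, 0 < k ∧
      (((s / k + 1) * (2 * L + (2 * k + 1) * 2 ^ k) + 5 * L + 2 : ℕ) : ℝ) ≤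
        (7 * r * h : ℝ) / Real.log (r + h) := by
  have hr0 : 100 ≤ (r : ℝ) := hr.trans ((Real.log_le_sub_one_of_pos (by
    rcases Nat.eq_zero_or_pos r with h0 | h0
    · subst h0; norm_num at hr
    · exact_mod_cast h0)).trans (by linarith))
  have hh0 : 100 ≤ (h : ℝ) := hh.trans ((Real.log_le_sub_one_of_pos (by
    rcases Nat.eq_zero_or_pos h with h0 | h0
    · subst h0; norm_num at hh
    · exact_mod_cast h0)).trans (by linarith))
  have hLh : (h : ℝ) ≤ L := by rw [hL]; exact_mod_cast le_max_right _ _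
  have hLr : (r : ℝ) + 1 ≤ L := by rw [hL]; exact_mod_cast le_max_left (r + 1) h
  have hprod : (L : ℝ) * s = (r + 1) * h := by
    have : L * s = (r + 1) * h := by rw [hs, hL, mul_comm, min_mul_max]
    exact_mod_cast this
  have hL0 : (0 : ℝ) < L := by linarith
  set l := Real.log L with hl
  have hl100 : 100 ≤ l := hh.trans (Real.log_le_log (by linarith) hLh)
  have hlog2 : Real.log 2 < 0.6931471808 := Real.log_two_lt_d9
  have hlrh : Real.log (r + h) ≤ 1.01 * l := by
    calc Real.log (r + h) ≤ Real.log (2 * L) := Real.log_le_log (by linarith) (by linarith)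
      _ = Real.log 2 + l := Real.log_mul (by norm_num) hL0.ne'
      _ ≤ _ := by linarith
  have hlrh0 : 0 < Real.log (r + h) := Real.log_pos (by linarith)
  have hLne : L ≠ 0 := by rintro rfl; simp at hL0
  set k := Nat.log 2 L / 2 with hkdef
  have h4 : 4 ^ k ≤ L := by
    calc 4 ^ k = 2 ^ (2 * k) := by rw [pow_mul]; norm_num
      _ ≤ 2 ^ Nat.log 2 L := Nat.pow_le_pow_right (by norm_num) (by omega)
      _ ≤ L := Nat.pow_log_le_self 2 hLne
  have hup : L < 2 ^ (2 * k + 2) :=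
    (Nat.lt_pow_succ_log_self (by norm_num) L).trans_le
      (Nat.pow_le_pow_right (by norm_num) (by omega))
  have hlk : l ≤ (2 * k + 2) * 0.6931471808 := by
    have h1 : l ≤ Real.log ((2 : ℝ) ^ (2 * k + 2)) :=
      Real.log_le_log hL0 (by exact_mod_cast hup.le)
    rw [Real.log_pow] at h1
    push_cast at h1
    nlinarith [Nat.cast_nonneg (α := ℝ) k]
  have hkl : l ≤ 1.5 * k := by linarith
  have hk3 : (3 : ℝ) ≤ k := by linarith
  have hk3' : 3 ≤ k := by exact_mod_cast hk3
  have h24 : (2 * k + 1) * 2 ^ k ≤ L := by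
    refine le_trans ?_ h4
    have : 2 * k + 1 ≤ 2 ^ k := by
      clear_value k
      clear * - hk3'
      induction k, hk3' using Nat.le_induction with
      | base => norm_num
      | succ n hn ih => rw [pow_succ]; omega
    calc (2 * k + 1) * 2 ^ k ≤ 2 ^ k * 2 ^ k := Nat.mul_le_mul_right _ this
      _ = 4 ^ k := by rw [← mul_pow]; norm_num
  refine ⟨k, by omega, ?_⟩
  have hE : (((s / k + 1) * (2 * L + (2 * k + 1) * 2 ^ k) + 5 * L + 2 : ℕ) : ℝ) ≤
      ((s : ℝ) / k + 1) * (3 * L) + 5 * L + 2 := by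
    calc (((s / k + 1) * (2 * L + (2 * k + 1) * 2 ^ k) + 5 * L + 2 : ℕ) : ℝ)
        ≤ (((s / k + 1) * (3 * L) + 5 * L + 2 : ℕ) : ℝ) := by
          have : (s / k + 1) * (2 * L + (2 * k + 1) * 2 ^ k) ≤ (s / k + 1) * (3 * L) :=
            Nat.mul_le_mul_left _ (by omega)
          exact_mod_cast by omega
      _ ≤ _ := by
          push_cast
          gcongr
          exact Nat.cast_div_le
  refine hE.trans ?_
  have hs0 : (0 : ℝ) ≤ s := Nat.cast_nonneg _
  have hsk : (s : ℝ) / k ≤ 1.5 * s / l := by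
    rw [div_le_div_iff₀ (by linarith) (by linarith)]
    nlinarith
  have h10 : 10 * (L : ℝ) ≤ 0.01 * (L * s / l) := by
    rw [← mul_div_assoc, le_div_iff₀ (by linarith)]
    have h1 : 1000 * l ≤ s := by nlinarith
    have h2 := mul_le_mul_of_nonneg_left h1 hL0.le
    linarith
  have hmain : ((s : ℝ) / k + 1) * (3 * L) + 5 * L + 2 ≤ 4.6 * (L * s / l) := by
    have : (s : ℝ) / k * (3 * L) ≤ 1.5 * s / l * (3 * L) := by gcongr
    have e : 1.5 * s / l * (3 * L) = 4.5 * (L * s / l) := by ring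
    rw [e] at this
    nlinarith
  refine hmain.trans ?_
  rw [hprod, ← mul_div_assoc, div_le_div_iff₀ (by linarith) hlrh0]
  have hrh : ((r : ℝ) + 1) * h ≤ 1.01 * (r * h) := by nlinarith
  calc 4.6 * (((r : ℝ) + 1) * h) * Real.log (r + h)
      ≤ 4.6 * (1.01 * (r * h)) * (1.01 * l) := by gcongr
    _ ≤ 7 * r * h * l := by
        have : 0 ≤ (r : ℝ) * h * l := by positivity
        nlinarith

end helpers

/-- Theorem 1.3 (main theorem): there is a threshold `N` such that for all integers
`r, h ≥ N` with `min (r+1) h ≥ 10 (ln max (r+1) h)^2`, any finite nonempty set `A` in an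
abelian group with `|A+A| = K|A|` and nonzero `λᵢ` with `|λᵢ| ≤ 2^r` satisfies
`|λ₁·A + ⋯ + λ_h·A| ≤ K^(7rh/ln(r+h)) |A|`. -/
theorem sum_of_dilates_bound :
    ∃ N : ℕ, ∀ r h : ℕ, N ≤ r → N ≤ h →
      (10 : ℝ) * Real.log (max (r + 1) h : ℕ) ^ 2 ≤ (min (r + 1) h : ℕ) →
      ∀ (G : Type) (_ : AddCommGroup G) (_ : DecidableEq G)
        (A : Finset G) (K : ℝ) (lam : Fin h → ℤ),
        A.Nonempty →
        (∀ i, lam i ≠ 0) →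
        (∀ i, |lam i| ≤ 2 ^ r) →
        ((A + A).card : ℝ) = K * A.card →
        ((∑ i, dilate (lam i) A).card : ℝ) ≤
          K ^ ((7 * r * h : ℝ) / Real.log (r + h)) * A.card := by
  refine ⟨⌈Real.exp 100⌉₊, fun r h hr hh hmin G _ _ A K lam hA _ hlam hK => ?_⟩
  have hlog : ∀ x : ℕ, ⌈Real.exp 100⌉₊ ≤ x → 100 ≤ Real.log x := by
    intro x hx
    have h1 : Real.exp 100 ≤ x := Nat.ceil_le.1 hx
    exact (Real.le_log_iff_exp_le ((Real.exp_pos _).trans_le h1)).2 h1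
  have hpos : (0 : ℝ) < A.card := by exact_mod_cast hA.card_pos
  have hK1 : 1 ≤ K := by
    have h1 : (A.card : ℝ) ≤ (A + A).card := by
      exact_mod_cast Finset.card_le_card_add_left hA
    rw [hK] at h1
    by_contra hcon
    push Not at hcon
    nlinarith
  obtain ⟨k, hk, hE⟩ := numeric_bound r h _ _ rfl rfl (hlog r hr) (hlog h hh) hmin
  refine (combined_bound hA hK hK1 r h k hk lam hlam).trans ?_
  gcongr ?_ * _
  rw [← Real.rpow_natCast]
  exact Real.rpow_le_rpow_of_exponent_le hK1 hE
end

section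
/- There exists a threshold N such that the following holds for all integers r, h ≥ N satisfying min{r+1, h} ≥ 10·(ln max{r+1, h})². Let A be a finite nonempty subset of an abelian group, let K be a real number with |A−A| = K·|A| (where A−A = {a−b : a,b ∈ A}), and let λ₁, …, λ_h be nonzero integers with |λᵢ| ≤ 2^r for every i. Then |λ₁·A + λ₂·A + … + λ_h·A| ≤ K^(7rh/ln(r+h)) · |A|. -/
open Pointwise

section helpers
variable {G : Type} [AddCommGroup G] [DecidableEq G]

lemma dilate_add_set (l : ℤ) (X Y : Finset G) :
    dilate l (X + Y) = dilate l X + dilate l Y := by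
  unfold dilate
  exact Finset.image_add (zsmulAddGroupHom l : G →+ G)

lemma dilate_zero_set (l : ℤ) : dilate l (0 : Finset G) = 0 := by
  unfold dilate
  rw [← Finset.singleton_zero, Finset.image_singleton]; simp

lemma dilate_sum_set {ι : Type*} (l : ℤ) (s : Finset ι) (Y : ι → Finset G) :
    dilate l (∑ i ∈ s, Y i) = ∑ i ∈ s, dilate l (Y i) := by
  classical
  induction s using Finset.induction_on with
  | empty => simp [dilate_zero_set]
  | insert a s ha ih => rw [Finset.sum_insert ha, Finset.sum_insert ha, dilate_add_set, ih]

lemma dilate_mul (a b : ℤ) (A : Finset G) : dilate (a * b) A = dilate a (dilate b A) := by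
  unfold dilate
  rw [Finset.image_image]
  congr 1; funext x; simp [mul_smul]

lemma dilate_one (A : Finset G) : dilate 1 A = A := by simp [dilate]

lemma dilate_neg_one (A : Finset G) : dilate (-1) A = -A := by
  simp only [dilate, neg_smul, one_smul]; rfl

lemma dilate_sum_subset {ι : Type*} (s : Finset ι) (c : ι → ℤ) (A : Finset G) :
    dilate (∑ i ∈ s, c i) A ⊆ ∑ i ∈ s, dilate (c i) A := by
  classical
  induction s using Finset.induction_on with
  | empty =>
    intro x hx
    simp only [dilate, Finset.sum_empty, Finset.mem_image, zero_smul] at hx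
    obtain ⟨_, _, rfl⟩ := hx
    simp
  | insert a s ha ih =>
    rw [Finset.sum_insert ha, Finset.sum_insert ha]
    intro x hx
    obtain ⟨y, hy, rfl⟩ := Finset.mem_image.1 hx
    simp only [add_smul]
    exact Finset.add_mem_add (Finset.mem_image_of_mem _ hy) (ih (Finset.mem_image_of_mem _ hy))

lemma sum_subset_sum_sets {ι : Type*} (s : Finset ι) (X Y : ι → Finset G)
    (hXY : ∀ i ∈ s, X i ⊆ Y i) : ∑ i ∈ s, X i ⊆ ∑ i ∈ s, Y i := by
  classical
  induction s using Finset.induction_on with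
  | empty => simp
  | insert a s ha ih =>
    rw [Finset.sum_insert ha, Finset.sum_insert ha]
    exact Finset.add_subset_add (hXY a (by simp)) (ih fun i hi => hXY i (by simp [hi]))

/-- Ruzsa-type replacement lemma. -/
lemma replace_card (l : ℤ) (X Y A : Finset G) :
    (X + dilate l Y).card * A.card ≤ (X + dilate l A).card * (Y - A).card := by
  classical
  have hch : ∀ z : G, ∃ p : G × G, z ∈ X + dilate l Y →
      p.1 ∈ X ∧ p.2 ∈ Y ∧ p.1 + l • p.2 = z := by
    intro z
    by_cases hz : z ∈ X + dilate l Y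
    · obtain ⟨x, hx, w, hw, rfl⟩ := Finset.mem_add.1 hz
      obtain ⟨y, hy, rfl⟩ := Finset.mem_image.1 hw
      exact ⟨(x, y), fun _ => ⟨hx, hy, rfl⟩⟩
    · exact ⟨(0, 0), fun h => absurd h hz⟩
  choose f hf using hch
  rw [← Finset.card_product, ← Finset.card_product]
  refine Finset.card_le_card_of_injOn
    (fun q => ((f q.1).1 + l • q.2, (f q.1).2 - q.2)) ?_ ?_
  · rintro ⟨z, a⟩ h
    simp only [Finset.coe_product, Set.mem_prod, Finset.mem_coe] at h ⊢
    obtain ⟨h1, h2, _⟩ := hf z h.1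
    exact ⟨Finset.add_mem_add h1 (Finset.mem_image_of_mem _ h.2), Finset.sub_mem_sub h2 h.2⟩
  · rintro ⟨z, a⟩ h ⟨z', a'⟩ h' heq
    simp only [Finset.coe_product, Set.mem_prod, Finset.mem_coe] at h h'
    obtain ⟨_, _, e1⟩ := hf z h.1
    obtain ⟨_, _, e2⟩ := hf z' h'.1
    simp only [Prod.mk.injEq] at heq
    obtain ⟨g1, g2⟩ := heq
    have hz : z = z' := by
      have t1 : z = ((f z).1 + l • a) + l • ((f z).2 - a) := by
        rw [smul_sub]; nth_rewrite 1 [← e1]; abel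
      have t2 : z' = ((f z').1 + l • a') + l • ((f z').2 - a') := by
        rw [smul_sub]; nth_rewrite 1 [← e2]; abel
      rw [t1, t2, g1, g2]
    subst hz
    have : a = a' := by simpa using g2
    rw [this]

/-- `Y` is contained in a signed sum of `c` copies of `A`. -/
def InPM (A Y : Finset G) (c : ℕ) : Prop := ∃ p q : ℕ, p + q = c ∧ Y ⊆ p • A - q • A

lemma InPM.add {A Y Z : Finset G} {c d : ℕ} (h : InPM A Y c) (h' : InPM A Z d) :
    InPM A (Y + Z) (c + d) := by
  obtain ⟨p, q, e, hs⟩ := h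
  obtain ⟨p', q', e', hs'⟩ := h'
  refine ⟨p + p', q + q', by omega, ?_⟩
  refine (Finset.add_subset_add hs hs').trans ?_
  rw [add_nsmul, add_nsmul, sub_add_sub_comm]

lemma InPM.zero (A : Finset G) : InPM A 0 0 := ⟨0, 0, rfl, by simp⟩
lemma InPM.self (A : Finset G) : InPM A A 1 := ⟨1, 0, rfl, by simp⟩
lemma InPM.neg (A : Finset G) : InPM A (-A) 1 := ⟨0, 1, rfl, by simp⟩

lemma InPM.sum {ι : Type*} {A : Finset G} (s : Finset ι) (Y : ι → Finset G) (c : ι → ℕ)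
    (h : ∀ i ∈ s, InPM A (Y i) (c i)) : InPM A (∑ i ∈ s, Y i) (∑ i ∈ s, c i) := by
  classical
  induction s using Finset.induction_on with
  | empty => exact InPM.zero A
  | insert a s ha ih =>
    rw [Finset.sum_insert ha, Finset.sum_insert ha]
    exact (h a (by simp)).add (ih fun i hi => h i (by simp [hi]))

lemma InPM.dilate_nat (A : Finset G) (n : ℕ) : InPM A (dilate (n : ℤ) A) n := by
  refine ⟨n, 0, rfl, ?_⟩
  have := dilate_sum_subset (Finset.range n) (fun _ => 1) A
  simpa [dilate_one] using this

lemma InPM.sign (A : Finset G) {e : ℤ} (he : e = 1 ∨ e = -1) : InPM A (dilate e A) 1 := by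
  rcases he with rfl | rfl
  · rw [dilate_one]; exact InPM.self A
  · rw [dilate_neg_one]; exact InPM.neg A

lemma InPM.card_le {A Y : Finset G} {c : ℕ} {K : ℝ} (h : InPM A Y c) (hA : A.Nonempty)
    (hK : ((A - A).card : ℝ) = K * A.card) : (Y.card : ℝ) ≤ K ^ c * A.card := by
  obtain ⟨p, q, e, hs⟩ := h
  have h1 := Finset.pluennecke_ruzsa_inequality_nsmul_sub_nsmul_sub hA A p q
  have h2 : (((p • A - q • A).card : ℚ) : ℝ) ≤
      ((((A - A).card : ℚ) / A.card) ^ (p + q) * A.card : ℚ) := by exact_mod_cast h1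
  push_cast at h2
  have hA0 : (A.card : ℝ) ≠ 0 := by simpa using hA.ne_empty
  rw [hK, mul_div_assoc, div_self hA0, mul_one, e] at h2
  exact le_trans (by exact_mod_cast Finset.card_le_card hs) h2

lemma K_ge_one {A : Finset G} {K : ℝ} (hA : A.Nonempty)
    (hK : ((A - A).card : ℝ) = K * A.card) : 1 ≤ K := by
  have h : (A.card : ℝ) ≤ (A - A).card := by
    exact_mod_cast Finset.card_le_card_sub_right hA
  have h0 : (0 : ℝ) < A.card := by exact_mod_cast hA.card_pos
  rw [hK] at h
  nlinarith

lemma replace_many {ι : Type*} {A : Finset G} {K : ℝ} (hA : A.Nonempty) (hK : 0 ≤ K)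
    (s : Finset ι) (l : ι → ℤ) (Y : ι → Finset G) (c : ι → ℕ)
    (hY : ∀ i ∈ s, ((Y i - A).card : ℝ) ≤ K ^ c i * A.card) (X : Finset G) :
    ((X + ∑ i ∈ s, dilate (l i) (Y i)).card : ℝ) ≤
      K ^ (∑ i ∈ s, c i) * (X + ∑ i ∈ s, dilate (l i) A).card := by
  classical
  have h0 : (0 : ℝ) < A.card := by exact_mod_cast hA.card_pos
  induction s using Finset.induction_on generalizing X with
  | empty => simp
  | insert a s ha ih =>
    rw [Finset.sum_insert ha, Finset.sum_insert ha, Finset.sum_insert ha, pow_add]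
    have h1 := replace_card (l a) (X + ∑ i ∈ s, dilate (l i) (Y i)) (Y a) A
    have h1' : ((X + ∑ i ∈ s, dilate (l i) (Y i) + dilate (l a) (Y a)).card : ℝ) * A.card
      ≤ (X + ∑ i ∈ s, dilate (l i) (Y i) + dilate (l a) A).card * (Y a - A).card := by
      exact_mod_cast h1
    have h2 := ih (fun i hi => hY i (by simp [hi])) (X + dilate (l a) A)
    have e1 : X + (dilate (l a) (Y a) + ∑ i ∈ s, dilate (l i) (Y i)) =
      X + ∑ i ∈ s, dilate (l i) (Y i) + dilate (l a) (Y a) := by abel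
    have e2 : X + ∑ i ∈ s, dilate (l i) (Y i) + dilate (l a) A =
      X + dilate (l a) A + ∑ i ∈ s, dilate (l i) (Y i) := by abel
    rw [e1, ← add_assoc X]
    rw [e2] at h1'
    have h3 := hY a (by simp)
    refine le_of_mul_le_mul_right (h1'.trans ?_) h0
    calc _ ≤ (K ^ (∑ i ∈ s, c i) * (X + dilate (l a) A + ∑ i ∈ s, dilate (l i) A).card)
          * (K ^ c a * A.card) := by gcongr
      _ = _ := by ring

lemma chain {A : Finset G} {K : ℝ} (hA : A.Nonempty)
    (hK : ((A - A).card : ℝ) = K * A.card) (m n : ℕ) :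
    ((∑ j ∈ Finset.range n, dilate ((m : ℤ) ^ j) A - A).card : ℝ)
      ≤ K ^ ((m + 2) * n + 1) * A.card := by
  have hK1 := K_ge_one hA hK
  have h0 : (0 : ℝ) < A.card := by exact_mod_cast hA.card_pos
  induction n with
  | zero =>
    have : InPM A (0 - A) 1 := by rw [zero_sub]; exact InPM.neg A
    simpa using this.card_le hA hK
  | succ n ih =>
    have e : ∑ j ∈ Finset.range (n + 1), dilate ((m : ℤ) ^ j) A - A =
        (A + -A) + dilate (m : ℤ) (∑ j ∈ Finset.range n, dilate ((m : ℤ) ^ j) A) := by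
      rw [Finset.sum_range_succ', dilate_sum_set, pow_zero, dilate_one]
      simp only [pow_succ', dilate_mul]
      rw [sub_eq_add_neg, add_assoc, add_comm]
    have h1 := replace_card (m : ℤ) (A + -A) (∑ j ∈ Finset.range n, dilate ((m : ℤ) ^ j) A) A
    rw [← e] at h1
    have h1' : ((∑ j ∈ Finset.range (n + 1), dilate ((m : ℤ) ^ j) A - A).card : ℝ) * A.card ≤
       (A + -A + dilate (m : ℤ) A).card *
        (∑ j ∈ Finset.range n, dilate ((m : ℤ) ^ j) A - A).card := by exact_mod_cast h1
    have h2 : ((A + -A + dilate (m : ℤ) A).card : ℝ) ≤ K ^ (1 + 1 + m) * A.card :=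
      (((InPM.self A).add (InPM.neg A)).add (InPM.dilate_nat A m)).card_le hA hK
    refine le_of_mul_le_mul_right (h1'.trans ?_) h0
    calc _ ≤ (K ^ (1 + 1 + m) * A.card) * (K ^ ((m + 2) * n + 1) * A.card) := by gcongr
      _ = _ := by ring

lemma chain' {A : Finset G} {K : ℝ} (hA : A.Nonempty)
    (hK : ((A - A).card : ℝ) = K * A.card) (m n : ℕ) :
    ((∑ j ∈ Finset.range n, dilate ((m : ℤ) ^ j) A).card : ℝ)
      ≤ K ^ ((m + 2) * n + 1) * A.card := by
  refine le_trans ?_ (chain hA hK m n)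
  exact_mod_cast Finset.card_le_card_sub_right hA

lemma digits_sum (b n m : ℕ) : ∑ j ∈ Finset.range m, b ^ j * (n / b ^ j % b) = n % b ^ m := by
  induction m with
  | zero => simp [Nat.mod_one]
  | succ m ih => rw [Finset.sum_range_succ, ih, Nat.mod_pow_succ]

lemma sign_pm {l : ℤ} (h : l ≠ 0) : l.sign = 1 ∨ l.sign = -1 := by
  rcases lt_or_gt_of_ne h with h | h
  · right; exact Int.sign_eq_neg_one_of_neg h
  · left; exact Int.sign_eq_one_of_pos h

lemma case_one {A : Finset G} {K : ℝ} (hA : A.Nonempty)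
    (hK : ((A - A).card : ℝ) = K * A.card) {h : ℕ} (lam : Fin h → ℤ) (hl : ∀ i, lam i ≠ 0)
    (b g : ℕ) (hb : 0 < b) (hlam : ∀ i, (lam i).natAbs < b ^ g) :
    ((∑ i, dilate (lam i) A).card : ℝ) ≤
      K ^ (g * (h + 2 * b + b * b + 3) + 1) * A.card := by
  classical
  have hK1 := K_ge_one hA hK
  set d : Fin h → ℕ → ℕ := fun i j => (lam i).natAbs / b ^ j % b with hd
  have hlam' : ∀ i, lam i = ∑ j ∈ Finset.range g, (b : ℤ) ^ j * ((d i j : ℤ) * (lam i).sign) := by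
    intro i
    have h1 := digits_sum b (lam i).natAbs g
    rw [Nat.mod_eq_of_lt (hlam i)] at h1
    have h2 : (∑ j ∈ Finset.range g, (b : ℤ) ^ j * (d i j : ℤ)) = (lam i).natAbs := by
      exact_mod_cast h1
    simp only [← mul_assoc]
    rw [← Finset.sum_mul, h2]
    rw [mul_comm]; exact (Int.sign_mul_natAbs _).symm
  set Y : ℕ → Finset G := fun j => ∑ i, dilate ((d i j : ℤ) * (lam i).sign) A with hY
  have hsub : ∑ i, dilate (lam i) A ⊆ 0 + ∑ j ∈ Finset.range g, dilate ((b : ℤ) ^ j) (Y j) := by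
    have : 0 + ∑ j ∈ Finset.range g, dilate ((b : ℤ) ^ j) (Y j) =
        ∑ i, ∑ j ∈ Finset.range g, dilate ((b : ℤ) ^ j * ((d i j : ℤ) * (lam i).sign)) A := by
      rw [Finset.sum_comm, zero_add]
      refine Finset.sum_congr rfl fun j _ => ?_
      rw [hY, dilate_sum_set]
      simp only [dilate_mul]
    rw [this]
    refine sum_subset_sum_sets _ _ _ fun i _ => ?_
    nth_rewrite 1 [hlam' i]
    exact dilate_sum_subset _ _ _
  have hYc : ∀ j ∈ Finset.range g, ((Y j - A).card : ℝ) ≤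
      K ^ (h + b + b * b + 1) * A.card := by
    intro j _
    have e : Y j - A = -A + ∑ s ∈ Finset.range b,
        dilate (s : ℤ) (∑ i with d i j = s, dilate (lam i).sign A) := by
      rw [sub_eq_add_neg, add_comm]
      congr 1
      change ∑ i, dilate ((d i j : ℤ) * (lam i).sign) A = _
      rw [← Finset.sum_fiberwise_of_maps_to (s := Finset.univ) (t := Finset.range b)
        (g := fun i => d i j) (fun i _ => Finset.mem_range.2 (Nat.mod_lt _ hb))]
      refine Finset.sum_congr rfl fun s _ => ?_
      rw [dilate_sum_set]
      refine Finset.sum_congr rfl fun i hi => ?_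
      rw [(Finset.mem_filter.1 hi).2, dilate_mul]
    rw [e]
    have h1 := replace_many hA (by linarith) (Finset.range b) (fun s => (s : ℤ))
      (fun s => ∑ i with d i j = s, dilate (lam i).sign A)
      (fun s => (∑ i : Fin h with d i j = s, 1) + 1) (K := K) (fun s _ => by
        have := ((InPM.sum (A := A) (Finset.univ.filter fun i => d i j = s)
          (fun i => dilate (lam i).sign A) (fun _ => 1)
          (fun i _ => InPM.sign A (sign_pm (hl i)))).add (InPM.neg A)).card_le hA hK
        rwa [← sub_eq_add_neg] at this) (-A)
    refine h1.trans ?_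
    have h2 := ((InPM.neg A).add (InPM.sum (Finset.range b) (fun s => dilate (s : ℤ) A)
      (fun s => s) (fun s _ => InPM.dilate_nat A s))).card_le hA hK
    have hc : ∑ s ∈ Finset.range b, ((∑ i : Fin h with d i j = s, 1) + 1) = h + b := by
      rw [Finset.sum_add_distrib, Finset.sum_fiberwise_of_maps_to
        (fun i _ => Finset.mem_range.2 (Nat.mod_lt _ hb))]
      simp
    have hs : ∑ s ∈ Finset.range b, s ≤ b * b := by
      calc _ ≤ ∑ s ∈ Finset.range b, b :=
            Finset.sum_le_sum fun s hs => (Finset.mem_range.1 hs).le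
        _ = _ := by simp
    rw [hc]
    calc _ ≤ K ^ (h + b) * (K ^ (1 + ∑ s ∈ Finset.range b, s) * A.card) := by gcongr
      _ ≤ K ^ (h + b) * (K ^ (1 + b * b) * A.card) := by
          have := pow_le_pow_right₀ hK1 (Nat.add_le_add_left hs 1)
          have h5 : (0 : ℝ) ≤ K ^ (h + b) := by positivity
          exact mul_le_mul_of_nonneg_left (mul_le_mul_of_nonneg_right this (Nat.cast_nonneg _)) h5
      _ = _ := by ring
  have hR := replace_many hA (by linarith) (Finset.range g) (fun j => (b : ℤ) ^ j) Y
    (fun _ => h + b + b * b + 1) hYc 0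
  have hC := chain' hA hK b g
  rw [zero_add (∑ i ∈ Finset.range g, dilate ((b : ℤ) ^ i) A)] at hR
  calc _ ≤ ((0 + ∑ j ∈ Finset.range g, dilate ((b : ℤ) ^ j) (Y j)).card : ℝ) := by
        exact_mod_cast Finset.card_le_card hsub
    _ ≤ _ := hR
    _ ≤ K ^ (∑ i ∈ Finset.range g, (h + b + b * b + 1)) * (K ^ ((b + 2) * g + 1) * A.card) := by
        gcongr
    _ = _ := by
        rw [← mul_assoc, ← pow_add, Finset.sum_const, Finset.card_range, smul_eq_mul]
        congr 2
        ring

lemma case_two {A : Finset G} {K : ℝ} (hA : A.Nonempty)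
    (hK : ((A - A).card : ℝ) = K * A.card) {h : ℕ} (lam : Fin h → ℤ) (hl : ∀ i, lam i ≠ 0)
    (m k g : ℕ) (hk : 0 < k) (hg : ∀ i : Fin h, i.val / k < g)
    (hlam : ∀ i, (lam i).natAbs < 2 ^ m) :
    ((∑ i, dilate (lam i) A).card : ℝ) ≤
      K ^ (g * (2 ^ k * (k + 1)) + m * (g + 1) + (4 * m + 1)) * A.card := by
  classical
  have hK1 := K_ge_one hA hK
  set B : ℕ → Finset (Fin h) := fun γ => Finset.univ.filter fun i => i.val / k = γ with hB
  have hBc : ∀ γ, (B γ).card ≤ k := by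
    intro γ
    have : (B γ).card ≤ (Finset.range k).card := by
      refine Finset.card_le_card_of_injOn (fun i => i.val % k) ?_ ?_
      · intro i _
        simpa using Nat.mod_lt _ hk
      · intro i hi j hj hij
        simp only [hB, Finset.coe_filter, Finset.mem_univ, true_and, Set.mem_ofPred_eq] at hi hj
        simp only at hij
        apply Fin.ext
        rw [← Nat.div_add_mod i.val k, ← Nat.div_add_mod j.val k, hi, hj, hij]
    simpa using this
  set P : ℕ → ℕ → Finset (Fin h) :=
    fun γ j => (B γ).filter fun i => (lam i).natAbs / 2 ^ j % 2 = 1 with hP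
  have hPT : ∀ γ j, P γ j ∈ (B γ).powerset := fun γ j =>
    Finset.mem_powerset.2 (Finset.filter_subset _ _)
  set mu : ℕ → Finset (Fin h) → ℤ :=
    fun γ S => ∑ j ∈ Finset.range m with P γ j = S, (2 : ℤ) ^ j with hmu
  -- the value of `lam i`
  have hval : ∀ γ, ∀ i ∈ B γ,
      lam i = ∑ S ∈ (B γ).powerset with i ∈ S, mu γ S * (lam i).sign := by
    intro γ i hi
    have h1 := digits_sum 2 (lam i).natAbs m
    rw [Nat.mod_eq_of_lt (hlam i)] at h1
    have h2 : ∑ S ∈ (B γ).powerset with i ∈ S, mu γ S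
        = ∑ j ∈ Finset.range m with i ∈ P γ j, (2 : ℤ) ^ j := by
      rw [← Finset.sum_fiberwise_of_maps_to (s := (Finset.range m).filter fun j => i ∈ P γ j)
        (t := (B γ).powerset.filter fun S => i ∈ S) (g := fun j => P γ j)]
      · refine Finset.sum_congr rfl fun S hS => ?_
        rw [hmu]
        refine Finset.sum_congr ?_ fun _ _ => rfl
        ext j
        simp only [Finset.mem_filter]
        have := (Finset.mem_filter.1 hS).2
        constructor
        · rintro ⟨a, b⟩
          exact ⟨⟨a, b ▸ this⟩, b⟩
        · rintro ⟨⟨a, _⟩, b⟩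
          exact ⟨a, b⟩
      · intro j hj
        exact Finset.mem_filter.2 ⟨hPT γ j, (Finset.mem_filter.1 hj).2⟩
    have h3 : ∑ j ∈ Finset.range m with i ∈ P γ j, (2 : ℤ) ^ j = (lam i).natAbs := by
      rw [← h1, Finset.sum_filter]
      push_cast
      refine Finset.sum_congr rfl fun j _ => ?_
      have hiP : i ∈ P γ j ↔ (lam i).natAbs / 2 ^ j % 2 = 1 := by
        simp [hP, hi]
      rcases Nat.mod_two_eq_zero_or_one ((lam i).natAbs / 2 ^ j) with h0 | h0
      · rw [if_neg (by rw [hiP, h0]; simp)]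
        have : (((lam i).natAbs / 2 ^ j % 2 : ℕ) : ℤ) = 0 := by rw [h0]; rfl
        push_cast at this
        rw [this, mul_zero]
      · rw [if_pos (by rw [hiP, h0])]
        have : (((lam i).natAbs / 2 ^ j % 2 : ℕ) : ℤ) = 1 := by rw [h0]; rfl
        push_cast at this
        rw [this, mul_one]
    rw [← Finset.sum_mul, h2, h3, mul_comm]
    exact (Int.sign_mul_natAbs _).symm
  set C : Finset (Σ _ : ℕ, Finset (Fin h)) :=
    (Finset.range g).sigma fun γ => (B γ).powerset with hC
  set Y : (Σ _ : ℕ, Finset (Fin h)) → Finset G :=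
    fun x => ∑ i ∈ x.2, dilate (lam i).sign A with hY
  have hsub : ∑ i, dilate (lam i) A ⊆ 0 + ∑ x ∈ C, dilate (mu x.1 x.2) (Y x) := by
    rw [zero_add, hC, Finset.sum_sigma]
    rw [← Finset.sum_fiberwise_of_maps_to (s := (Finset.univ : Finset (Fin h)))
      (t := Finset.range g) (g := fun i => i.val / k) (fun i _ => Finset.mem_range.2 (hg i))]
    refine sum_subset_sum_sets _ _ _ fun γ _ => ?_
    have e : ∑ S ∈ (B γ).powerset, dilate (mu γ S) (Y ⟨γ, S⟩) =
        ∑ i ∈ B γ, ∑ S ∈ (B γ).powerset with i ∈ S, dilate (mu γ S * (lam i).sign) A := by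
      rw [Finset.sum_comm' (t' := (B γ).powerset) (s' := fun S => S)]
      · refine Finset.sum_congr rfl fun S _ => ?_
        rw [hY, dilate_sum_set]
        simp only [dilate_mul]
      · intro i S
        simp only [Finset.mem_filter, Finset.mem_powerset]
        constructor
        · rintro ⟨_, a, b⟩; exact ⟨b, a⟩
        · rintro ⟨b, a⟩; exact ⟨a b, a, b⟩
    change _ ⊆ ∑ S ∈ (B γ).powerset, dilate (mu γ S) (Y ⟨γ, S⟩)
    rw [e]
    refine sum_subset_sum_sets _ _ _ fun i hi => ?_
    nth_rewrite 1 [hval γ i hi]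
    exact dilate_sum_subset _ _ _
  have hYc : ∀ x ∈ C, ((Y x - A).card : ℝ) ≤ K ^ (k + 1) * A.card := by
    rintro ⟨γ, S⟩ hx
    have hS : S ⊆ B γ := Finset.mem_powerset.1 (Finset.mem_sigma.1 hx).2
    have h1 := ((InPM.sum (A := A) S (fun i => dilate (lam i).sign A) (fun _ => 1)
          (fun i _ => InPM.sign A (sign_pm (hl i)))).add (InPM.neg A)).card_le hA hK
    rw [← sub_eq_add_neg] at h1
    refine h1.trans ?_
    have : ∑ i ∈ S, 1 ≤ k := by
      simpa using (Finset.card_le_card hS).trans (hBc γ)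
    gcongr
  have hR := replace_many hA (by linarith) C (fun x => mu x.1 x.2) Y (fun _ => k + 1) hYc 0
  have hcost : ∑ x ∈ C, (k + 1) ≤ g * (2 ^ k * (k + 1)) := by
    rw [hC, Finset.sum_sigma]
    calc _ ≤ ∑ γ ∈ Finset.range g, 2 ^ k * (k + 1) := by
          refine Finset.sum_le_sum fun γ _ => ?_
          rw [Finset.sum_const, Finset.card_powerset, smul_eq_mul]
          exact Nat.mul_le_mul_right _ (Nat.pow_le_pow_right (by norm_num) (hBc γ))
      _ = _ := by simp
  have hsub2 : 0 + ∑ x ∈ C, dilate (mu x.1 x.2) A ⊆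
      0 + ∑ j ∈ Finset.range m, dilate ((2 : ℤ) ^ j) (∑ γ ∈ Finset.range g, A) := by
    rw [zero_add, zero_add, hC, Finset.sum_sigma]
    simp only [dilate_sum_set]
    rw [Finset.sum_comm]
    refine sum_subset_sum_sets _ _ _ fun γ _ => ?_
    rw [← Finset.sum_fiberwise_of_maps_to (s := Finset.range m) (t := (B γ).powerset)
      (g := fun j => P γ j) (fun j _ => hPT γ j)]
    refine sum_subset_sum_sets _ _ _ fun S _ => ?_
    exact dilate_sum_subset _ _ _
  have hR2 := replace_many hA (by linarith) (K := K) (Finset.range m) (fun j => (2 : ℤ) ^ j)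
    (fun _ => ∑ γ ∈ Finset.range g, A) (fun _ => g + 1) (fun j _ => by
      have h1 := ((InPM.sum (A := A) (Finset.range g) (fun _ => A) (fun _ => 1)
          (fun i _ => InPM.self A)).add (InPM.neg A)).card_le hA hK
      rw [← sub_eq_add_neg] at h1
      simpa using h1) 0
  have hCh := chain' hA hK 2 m
  rw [zero_add (∑ i ∈ Finset.range m, dilate ((2 : ℤ) ^ i) A)] at hR2
  have hs1 : ((∑ i, dilate (lam i) A).card : ℝ) ≤
      ((0 + ∑ x ∈ C, dilate (mu x.1 x.2) (Y x)).card : ℝ) := by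
    exact_mod_cast Finset.card_le_card hsub
  have hs2 : ((0 + ∑ x ∈ C, dilate (mu x.1 x.2) A).card : ℝ) ≤
      (0 + ∑ j ∈ Finset.range m, dilate ((2 : ℤ) ^ j) (∑ γ ∈ Finset.range g, A)).card := by
    exact_mod_cast Finset.card_le_card hsub2
  have hCh' : ((∑ j ∈ Finset.range m, dilate ((2 : ℤ) ^ j) A).card : ℝ)
      ≤ K ^ (4 * m + 1) * A.card := by exact_mod_cast hCh
  have hm : ∑ i ∈ Finset.range m, (g + 1) = m * (g + 1) := by
    rw [Finset.sum_const, Finset.card_range, smul_eq_mul]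
  rw [hm] at hR2
  calc _ ≤ _ := hs1
    _ ≤ _ := hR
    _ ≤ K ^ (g * (2 ^ k * (k + 1))) * (K ^ (m * (g + 1)) * (K ^ (4 * m + 1) * A.card)) := by
        have h4 : ((0 + ∑ x ∈ C, dilate (mu x.1 x.2) A).card : ℝ) ≤
          K ^ (m * (g + 1)) * (K ^ (4 * m + 1) * A.card) :=
          hs2.trans (hR2.trans (by gcongr))
        gcongr
    _ = _ := by rw [pow_add, pow_add]; ring

end helpers

lemma two_pow_aux (k : ℕ) (hk : 10 ≤ k) : 1024 ≤ 2 ^ k ∧ 2 * (k + 1) ≤ 2 ^ k := by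
  induction k, hk using Nat.le_induction with
  | base => norm_num
  | succ n hn ih => rw [pow_succ]; omega

/-- Conversion of the exponent estimate. -/
lemma exponent_le (r h k E M : ℕ) (hk : 10 ≤ k) (hM2 : M < 8 ^ (k + 1)) (hrh : r + h ≤ 2 * M)
    (h2 : 2 ≤ r + h) (hE : (E : ℝ) * k ≤ 2 * (r * h)) :
    (E : ℝ) ≤ (7 * r * h : ℝ) / Real.log (r + h) := by
  have hk' : (10 : ℝ) ≤ k := by exact_mod_cast hk
  have h2' : (2 : ℝ) ≤ (r : ℝ) + h := by exact_mod_cast h2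
  have hpos : 0 < Real.log ((r : ℝ) + h) := Real.log_pos (by linarith)
  have hL : Real.log ((r : ℝ) + h) ≤ (3 * k + 4) * Real.log 2 := by
    have : ((r : ℝ) + h) ≤ 2 ^ (3 * k + 4) := by
      have h1 : r + h ≤ 2 ^ (3 * k + 4) := by
        have : 2 ^ (3 * k + 4) = 2 * 8 ^ (k + 1) := by
          rw [show (8 : ℕ) = 2 ^ 3 by norm_num, ← pow_mul]; ring
        omega
      exact_mod_cast h1
    have h3 := Real.log_le_log (by linarith) this
    rw [Real.log_pow] at h3
    push_cast at h3
    exact h3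
  have hl2 := Real.log_two_lt_d9
  have hL' : Real.log ((r : ℝ) + h) ≤ 3 * k := by nlinarith
  rw [le_div_iff₀ hpos]
  have hE0 : (0 : ℝ) ≤ E := by positivity
  have hrh0 : (0 : ℝ) ≤ (r : ℝ) * h := by positivity
  nlinarith [mul_le_mul_of_nonneg_left hL' hE0]


theorem sum_of_dilates_bound_diff :
    ∃ N : ℕ, ∀ r h : ℕ, N ≤ r → N ≤ h →
      (10 : ℝ) * Real.log (max (r + 1) h : ℕ) ^ 2 ≤ (min (r + 1) h : ℕ) →
      ∀ (G : Type) (_ : AddCommGroup G) (_ : DecidableEq G)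
        (A : Finset G) (K : ℝ) (lam : Fin h → ℤ),
        A.Nonempty →
        (∀ i, lam i ≠ 0) →
        (∀ i, |lam i| ≤ 2 ^ r) →
        ((A - A).card : ℝ) = K * A.card →
        ((∑ i, dilate (lam i) A).card : ℝ) ≤
          K ^ ((7 * r * h : ℝ) / Real.log (r + h)) * A.card := by
  refine ⟨8 ^ 10, ?_⟩
  intro r h hr hh hmin G _ _ A K lam hA hl hlam hK
  have hK1 := K_ge_one hA hK
  obtain ⟨M, hMdef⟩ : ∃ M, M = max (r + 1) h := ⟨_, rfl⟩
  rw [← hMdef] at hmin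
  have hM8 : 8 ^ 10 ≤ M := by omega
  obtain ⟨k, hkdef⟩ : ∃ k, k = Nat.log 8 M := ⟨_, rfl⟩
  have hk1 : 8 ^ k ≤ M := by rw [hkdef]; exact Nat.pow_log_le_self 8 (by omega)
  have hk2 : M < 8 ^ (k + 1) := by
    rw [hkdef]; exact Nat.lt_pow_succ_log_self (by norm_num) M
  have hk : 10 ≤ k := by
    rw [hkdef]; exact Nat.le_log_of_pow_le (by norm_num) hM8
  have hk' : (10 : ℝ) ≤ k := by exact_mod_cast hk
  obtain ⟨hb1, hb2⟩ := two_pow_aux k hk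
  have h8 : (8 : ℕ) ^ k = 2 ^ k * 2 ^ k * 2 ^ k := by
    rw [← mul_pow, ← mul_pow]
    norm_num
  -- the minimum is at least `400 * k`
  have hmk : 400 * k ≤ min (r + 1) h := by
    have hlog : (k : ℝ) * Real.log 8 ≤ Real.log M := by
      rw [← Real.log_pow]
      exact Real.log_le_log (by positivity) (by exact_mod_cast hk1)
    have hl8 : (2 : ℝ) ≤ Real.log 8 := by
      rw [show (8 : ℝ) = 2 ^ 3 by norm_num, Real.log_pow]
      have := Real.log_two_gt_d9
      push_cast; linarith
    have h3 : (2 * k : ℝ) ≤ Real.log M := by nlinarith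
    have h4 : (400 * k : ℝ) ≤ (min (r + 1) h : ℕ) := by nlinarith
    exact_mod_cast h4
  have hkr : 400 * k ≤ r + 1 := hmk.trans (min_le_left _ _)
  have hkh : 400 * k ≤ h := hmk.trans (min_le_right _ _)
  have hkr' : (400 * k : ℝ) ≤ r + 1 := by exact_mod_cast hkr
  have hkh' : (400 * k : ℝ) ≤ h := by exact_mod_cast hkh
  have hrh : r + h ≤ 2 * M := by omega
  have hnat : ∀ i, (lam i).natAbs ≤ 2 ^ r := by
    intro i
    have := hlam i
    rw [Int.abs_eq_natAbs] at this
    exact_mod_cast this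
  have hr' : (1000 : ℝ) ≤ r := by exact_mod_cast (by omega : 1000 ≤ r)
  have hh' : (1000 : ℝ) ≤ h := by exact_mod_cast (by omega : 1000 ≤ h)
  have h0 : (0 : ℝ) < A.card := by exact_mod_cast hA.card_pos
  have finish : ∀ E : ℕ, (E : ℝ) * k ≤ 2 * (r * h) →
      ((∑ i, dilate (lam i) A).card : ℝ) ≤ K ^ E * A.card →
      ((∑ i, dilate (lam i) A).card : ℝ) ≤
          K ^ ((7 * r * h : ℝ) / Real.log (r + h)) * A.card := by
    intro E hE hc
    refine hc.trans (mul_le_mul_of_nonneg_right ?_ h0.le)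
    rw [← Real.rpow_natCast]
    exact Real.rpow_le_rpow_of_exponent_le hK1
      (exponent_le r h k E M hk hk2 hrh (by omega) hE)
  have hb1' : (1024 : ℝ) ≤ 2 ^ k := by exact_mod_cast hb1
  have hb2' : (2 * (k + 1) : ℝ) ≤ 2 ^ k := by exact_mod_cast hb2
  have h8' : (2 : ℝ) ^ k * 2 ^ k * 2 ^ k ≤ M := by rw [h8] at hk1; exact_mod_cast hk1
  have hsq : (1024 : ℝ) * (2 ^ k * 2 ^ k) ≤ M := by nlinarith
  by_cases hcase : r + 1 ≤ h
  · have hMh : M = h := by omega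
    rw [hMh] at hsq
    obtain ⟨g, hg⟩ : ∃ g, g = (r + 1) / k + 1 := ⟨_, rfl⟩
    have hgk : g * k ≤ r + 1 + k := by
      rw [hg, add_mul, one_mul]
      have := Nat.div_mul_le_self (r + 1) k
      omega
    have hgk2 : r < k * g := by
      have := Nat.lt_mul_div_succ (r + 1) (show 0 < k by omega)
      rw [hg]; omega
    refine finish _ ?_ (case_one hA hK lam hl (2 ^ k) g (by positivity) ?_)
    · have hgk' : (g : ℝ) * k ≤ r + 1 + k := by exact_mod_cast hgk
      push_cast
      have hP : (g : ℝ) * k ≤ 1.1 * r := by linarith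
      have hQ : (h : ℝ) + 2 * 2 ^ k + 2 ^ k * 2 ^ k + 3 ≤ 1.1 * h := by nlinarith
      have hPQ : ((g : ℝ) * k) * (h + 2 * 2 ^ k + 2 ^ k * 2 ^ k + 3) ≤ (1.1 * r) * (1.1 * h) :=
        mul_le_mul hP hQ (by positivity) (by positivity)
      have hkk : (k : ℝ) ≤ 0.1 * (r * h) := by nlinarith
      nlinarith
    · intro i
      rw [← pow_mul]
      exact (hnat i).trans_lt (Nat.pow_lt_pow_right (by norm_num) hgk2)
  · have hMh : M = r + 1 := by omega
    rw [hMh] at hsq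
    push_cast at hsq
    obtain ⟨g, hg⟩ : ∃ g, g = h / k + 1 := ⟨_, rfl⟩
    have hgk : g * k ≤ h + k := by
      rw [hg, add_mul, one_mul]
      have := Nat.div_mul_le_self h k
      omega
    refine finish _ ?_ (case_two hA hK lam hl (r + 1) k g (by omega) ?_ ?_)
    · have hgk' : (g : ℝ) * k ≤ h + k := by exact_mod_cast hgk
      push_cast
      have hP : (g : ℝ) * k ≤ 1.01 * h := by linarith
      have hQ : (2 : ℝ) ^ k * (k + 1) ≤ 0.1 * r := by nlinarith
      have h1 : ((g : ℝ) * k) * (2 ^ k * (k + 1)) ≤ (1.01 * h) * (0.1 * r) :=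
        mul_le_mul hP hQ (by positivity) (by positivity)
      have h2 : ((r : ℝ) + 1) * (g * k + k) ≤ (1.1 * r) * (1.1 * h) :=
        mul_le_mul (by linarith) (by linarith) (by positivity) (by positivity)
      have h3 : (4 * ((r : ℝ) + 1) + 1) * k ≤ (5 * r) * (0.01 * h) :=
        mul_le_mul (by linarith) (by linarith) (by positivity) (by positivity)
      have hrh0 : (0 : ℝ) ≤ (r : ℝ) * h := by positivity
      nlinarith
    · intro i
      rw [hg]
      have := Nat.div_le_div_right (c := k) i.isLt.le
      omega
    · intro i
      exact (hnat i).trans_lt (Nat.pow_lt_pow_right (by norm_num) (by omega))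
end

section
/- There exist a constant C > 0 and a threshold N such that the following holds for all positive integers r and h with r + h ≥ N. Let A be a finite nonempty subset of an abelian group, let K be a real number with |A+A| = K·|A|, and let λ₁, …, λ_h be nonzero integers with |λᵢ| ≤ 2^r for every i. Then |λ₁·A + λ₂·A + … + λ_h·A| ≤ K^(C·(r+h)²/ln(r+h)) · |A|. -/
open Pointwise

namespace SDil

/-- `m`-fold iterated sumset. -/
def iter {G : Type} [AddCommGroup G] [DecidableEq G] (m : ℕ) (A : Finset G) : Finset G :=
  ∑ _i ∈ Finset.range m, A

/-- `X` is covered by at most `K ^ n` translates of `Y`. -/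
def Cov {G : Type} [AddCommGroup G] [DecidableEq G] (K : ℝ) (X Y : Finset G) (n : ℕ) : Prop :=
  ∃ S : Finset G, (S.card : ℝ) ≤ K ^ n ∧ X ⊆ S + Y

section
variable {G : Type} [AddCommGroup G] [DecidableEq G]

/-- Dilation as an additive hom. -/
def dhom (l : ℤ) : G →+ G where
  toFun a := l • a
  map_zero' := smul_zero l
  map_add' := smul_add l

lemma dilate_eq (l : ℤ) (A : Finset G) : dilate l A = A.image (dhom l) := rfl

lemma dilate_add (l : ℤ) (X Y : Finset G) : dilate l (X + Y) = dilate l X + dilate l Y := by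
  rw [dilate_eq, dilate_eq, dilate_eq]
  exact Finset.image_add (dhom l)

lemma dilate_zero_set (l : ℤ) : dilate l (0 : Finset G) = 0 := by
  rw [dilate_eq]
  rw [Finset.image_zero, map_zero]
  rfl

lemma dilate_sum {ι : Type} [DecidableEq ι] (l : ℤ) (s : Finset ι) (f : ι → Finset G) :
    dilate l (∑ i ∈ s, f i) = ∑ i ∈ s, dilate l (f i) := by
  induction s using Finset.induction_on with
  | empty => simp [dilate_zero_set]
  | insert a s ha ih => rw [Finset.sum_insert ha, Finset.sum_insert ha, dilate_add, ih]

lemma dilate_mono (l : ℤ) {X Y : Finset G} (h : X ⊆ Y) : dilate l X ⊆ dilate l Y :=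
  Finset.image_subset_image h

lemma dilate_mul (a b : ℤ) (X : Finset G) : dilate (a * b) X = dilate a (dilate b X) := by
  unfold dilate
  rw [Finset.image_image]
  congr 1
  funext x
  simp [mul_smul]

lemma dilate_add_subset (a b : ℤ) (X : Finset G) : dilate (a + b) X ⊆ dilate a X + dilate b X := by
  intro x hx
  unfold dilate at *
  obtain ⟨y, hy, rfl⟩ := Finset.mem_image.1 hx
  simp only [add_smul]
  exact Finset.add_mem_add (Finset.mem_image_of_mem _ hy) (Finset.mem_image_of_mem _ hy)

lemma sum_subset {ι : Type} [DecidableEq ι] (s : Finset ι) {f g : ι → Finset G}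
    (h : ∀ i ∈ s, f i ⊆ g i) : ∑ i ∈ s, f i ⊆ ∑ i ∈ s, g i := by
  induction s using Finset.induction_on with
  | empty => simp
  | insert a s ha ih =>
    rw [Finset.sum_insert ha, Finset.sum_insert ha]
    exact Finset.add_subset_add (h a (by simp)) (ih fun i hi => h i (by simp [hi]))

lemma iter_succ (m : ℕ) (A : Finset G) : iter (m + 1) A = iter m A + A := by
  unfold iter
  rw [Finset.sum_range_succ]

lemma iter_zero (A : Finset G) : iter 0 A = 0 := by simp [iter]

lemma iter_add (m n : ℕ) (A : Finset G) : iter (m + n) A = iter m A + iter n A := by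
  induction n with
  | zero => simp [iter_zero]
  | succ n ih => rw [← add_assoc, iter_succ, ih, iter_succ, add_assoc]

lemma sum_iter {ι : Type} [DecidableEq ι] (s : Finset ι) (f : ι → ℕ) (A : Finset G) :
    ∑ i ∈ s, iter (f i) A = iter (∑ i ∈ s, f i) A := by
  induction s using Finset.induction_on with
  | empty => simp [iter_zero]
  | insert a s ha ih => rw [Finset.sum_insert ha, Finset.sum_insert ha, iter_add, ih]

lemma sum_const_eq {ι : Type} (s : Finset ι) (A : Finset G) :
    ∑ _i ∈ s, A = iter s.card A := by
  unfold iter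
  rw [Finset.sum_const, Finset.sum_const, Finset.card_range]

lemma dilate_iter (l : ℤ) (m : ℕ) (A : Finset G) : dilate l (iter m A) = iter m (dilate l A) :=
  dilate_sum _ _ _

lemma dilate_nat_subset (n : ℕ) (A : Finset G) : dilate (n : ℤ) A ⊆ iter n A := by
  induction n with
  | zero =>
    intro x hx
    obtain ⟨y, hy, rfl⟩ := Finset.mem_image.1 hx
    simp [iter_zero]
  | succ n ih =>
    rw [iter_succ]
    push_cast
    refine (dilate_add_subset _ _ _).trans (Finset.add_subset_add ih ?_)
    intro x hx
    obtain ⟨y, hy, rfl⟩ := Finset.mem_image.1 hx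
    simpa using hy

lemma dilate_neg_sub (c : ℤ) (A : Finset G) : dilate (-c) (A - A) ⊆ dilate c (A - A) := by
  intro x hx
  obtain ⟨y, hy, rfl⟩ := Finset.mem_image.1 hx
  obtain ⟨a, ha, b, hb, rfl⟩ := Finset.mem_sub.1 hy
  refine Finset.mem_image.2 ⟨b - a, Finset.sub_mem_sub hb ha, ?_⟩
  simp only [neg_smul, ← smul_neg, neg_sub]

lemma dilate_int_subset (c : ℤ) (A : Finset G) : dilate c (A - A) ⊆ iter c.natAbs (A - A) := by
  rcases Int.natAbs_eq c with h | h
  · conv_lhs => rw [h]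
    exact dilate_nat_subset _ _
  · conv_lhs => rw [h]
    exact (dilate_neg_sub _ _).trans (dilate_nat_subset _ _)

lemma Cov.mono {K : ℝ} (hK : 1 ≤ K) {X X' Y : Finset G} {m n : ℕ} (h : Cov K X Y m)
    (hX : X' ⊆ X) (hmn : m ≤ n) : Cov K X' Y n := by
  obtain ⟨S, hS, hSX⟩ := h
  exact ⟨S, hS.trans (pow_le_pow_right₀ hK hmn), hX.trans hSX⟩

lemma Cov.trans {K : ℝ} (hK : 1 ≤ K) {X Y Z : Finset G} {m n : ℕ} (h : Cov K X Y m)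
    (h' : Cov K Y Z n) : Cov K X Z (m + n) := by
  obtain ⟨S, hS, hSX⟩ := h
  obtain ⟨T, hT, hTX⟩ := h'
  refine ⟨S + T, ?_, ?_⟩
  · calc ((S + T).card : ℝ) ≤ S.card * T.card := by exact_mod_cast Finset.card_add_le
      _ ≤ K ^ m * K ^ n := by gcongr
      _ = _ := (pow_add _ _ _).symm
  · rw [add_assoc]
    exact hSX.trans (Finset.add_subset_add_left hTX)

lemma Cov.add {K : ℝ} (hK : 1 ≤ K) {X Y X' Y' : Finset G} {m n : ℕ} (h : Cov K X Y m)
    (h' : Cov K X' Y' n) : Cov K (X + X') (Y + Y') (m + n) := by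
  obtain ⟨S, hS, hSX⟩ := h
  obtain ⟨T, hT, hTX⟩ := h'
  refine ⟨S + T, ?_, ?_⟩
  · calc ((S + T).card : ℝ) ≤ S.card * T.card := by exact_mod_cast Finset.card_add_le
      _ ≤ K ^ m * K ^ n := by gcongr
      _ = _ := (pow_add _ _ _).symm
  · rw [add_add_add_comm]
    exact Finset.add_subset_add hSX hTX

lemma Cov.dil {K : ℝ} {X Y : Finset G} {m : ℕ} (l : ℤ) (h : Cov K X Y m) :
    Cov K (dilate l X) (dilate l Y) m := by
  obtain ⟨S, hS, hSX⟩ := h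
  refine ⟨dilate l S, le_trans ?_ hS, ?_⟩
  · exact_mod_cast Finset.card_image_le
  · rw [← dilate_add]
    exact dilate_mono _ hSX

lemma Cov.of_subset {K : ℝ} {X Y : Finset G} (h : X ⊆ Y) : Cov K X Y 0 :=
  ⟨0, by simp, by rwa [zero_add]⟩

lemma Cov.sum {K : ℝ} (hK : 1 ≤ K) {ι : Type} [DecidableEq ι] (s : Finset ι)
    (f g : ι → Finset G) (e : ι → ℕ) (h : ∀ i ∈ s, Cov K (f i) (g i) (e i)) :
    Cov K (∑ i ∈ s, f i) (∑ i ∈ s, g i) (∑ i ∈ s, e i) := by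
  induction s using Finset.induction_on with
  | empty => simpa using Cov.of_subset (subset_refl _)
  | insert a s ha ih =>
    rw [Finset.sum_insert ha, Finset.sum_insert ha, Finset.sum_insert ha]
    exact (h a (by simp)).add hK (ih fun i hi => h i (by simp [hi]))

lemma pr {A : Finset G} {K : ℝ} (hA : A.Nonempty) (hAK : ((A + A).card : ℝ) = K * A.card)
    (m n : ℕ) : ((iter m A - iter n A).card : ℝ) ≤ K ^ (m + n) * A.card := by
  have h := Finset.pluennecke_ruzsa_inequality_nsmul_sub_nsmul_add hA A m n
  have hc : (0 : ℝ) < A.card := by exact_mod_cast hA.card_pos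
  have hK : K = (A + A).card / A.card := by rw [hAK]; field_simp
  have e : ∀ k, iter k A = k • A := fun k => by simp [iter]
  rw [e, e, hK]
  have h2 := (NNRat.cast_le (K := ℝ)).2 h
  push_cast at h2
  exact h2

lemma iter_sub (k : ℕ) (A : Finset G) : iter k (A - A) = iter k A - iter k A := by
  induction k with
  | zero => simp [iter_zero]
  | succ k ih => rw [iter_succ, iter_succ, ih]; exact (add_sub_add_comm _ _ _ _).symm

lemma cov_iter {A : Finset G} {K : ℝ} (hA : A.Nonempty)
    (hAK : ((A + A).card : ℝ) = K * A.card) (m : ℕ) : Cov K (iter m A) (A - A) (m + 1) := by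
  have h : ((iter m A + A).card : ℝ) ≤ K ^ (m + 1) * A.card := by
    have := pr hA hAK (m + 1) 0
    rwa [iter_zero, sub_zero, iter_succ] at this
  obtain ⟨F, -, h1, h2⟩ := Finset.ruzsa_covering_add hA h
  exact ⟨F, h1, h2⟩

lemma cov_iterD {A : Finset G} {K : ℝ} (hA : A.Nonempty)
    (hAK : ((A + A).card : ℝ) = K * A.card) (m : ℕ) :
    Cov K (iter m (A - A)) (A - A) (2 * m + 1) := by
  have h : ((iter m (A - A) + A).card : ℝ) ≤ K ^ (2 * m + 1) * A.card := by
    have := pr hA hAK (m + 1) m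
    rw [iter_succ] at this
    rw [iter_sub, sub_add_eq_add_sub]
    convert this using 3
    omega
  obtain ⟨F, -, h1, h2⟩ := Finset.ruzsa_covering_add hA h
  exact ⟨F, h1, h2⟩

lemma digit_cov {A : Finset G} {K : ℝ} (hK : 1 ≤ K) (hA : A.Nonempty)
    (hAK : ((A + A).card : ℝ) = K * A.card) {h : ℕ} (q : ℕ) (c : Fin h → ℤ)
    (hc : ∀ i, |c i| < q) :
    ∃ k ≤ 2 * q * q, Cov K (∑ i, dilate (c i) A) (iter k (A - A)) (h + 2 * q) := by
  classical
  set s : Finset ℤ := Finset.Ico (-(q : ℤ)) q with hs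
  have hcard : s.card = 2 * q := by simp [hs]; omega
  have hmem : ∀ i ∈ (Finset.univ : Finset (Fin h)), c i ∈ s := by
    intro i _
    have := abs_lt.1 (hc i)
    simp [hs]; omega
  refine ⟨∑ x ∈ s, x.natAbs, ?_, ?_⟩
  · calc ∑ x ∈ s, x.natAbs ≤ ∑ x ∈ s, q := by
          apply Finset.sum_le_sum
          intro x hx
          simp [hs] at hx
          omega
      _ = 2 * q * q := by simp [hcard]
  · have e1 : ∑ i, dilate (c i) A =
        ∑ x ∈ s, dilate x (iter (Finset.univ.filter fun i => c i = x).card A) := by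
      rw [← Finset.sum_fiberwise_of_maps_to hmem]
      refine Finset.sum_congr rfl fun x _ => ?_
      rw [dilate_iter, ← sum_const_eq]
      refine Finset.sum_congr rfl fun i hi => ?_
      rw [(Finset.mem_filter.1 hi).2]
    have e2 : h + 2 * q = ∑ x ∈ s, ((Finset.univ.filter fun i => c i = x).card + 1) := by
      rw [Finset.sum_add_distrib, ← Finset.card_eq_sum_card_fiberwise hmem]
      simp [hcard]
    rw [e1, e2]
    have := Cov.sum hK s _ _ _ fun x _ => (cov_iter hA hAK
      (Finset.univ.filter fun i => c i = x).card).dil x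
    have h2 := this.trans hK (Cov.of_subset (K := K)
      (sum_subset s fun x _ => dilate_int_subset x A))
    rwa [sum_iter, add_zero] at h2

lemma main_cov {A : Finset G} {K : ℝ} (hK : 1 ≤ K) (hA : A.Nonempty)
    (hAK : ((A + A).card : ℝ) = K * A.card) {h : ℕ} (q : ℕ) (hq : 0 < q) (L : ℕ) :
    ∀ (lam : Fin h → ℤ), (∀ i, |lam i| < (q : ℤ) ^ L) →
    Cov K (∑ i, dilate (lam i) A) (A - A) (L * (h + 9 * q * q)) := by
  induction L with
  | zero =>
    intro lam hl
    have : ∀ i, lam i = 0 := fun i => by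
      have := hl i
      simpa using this
    simp only [this, zero_mul]
    apply Cov.of_subset
    have e : dilate 0 A = 0 := by
      unfold dilate
      ext x
      simp only [zero_smul, Finset.mem_image, Finset.mem_zero]
      exact ⟨fun ⟨_, _, hx⟩ => hx.symm, fun hx => ⟨_, hA.choose_spec, hx.symm⟩⟩
    simp only [e, Finset.sum_const_zero]
    rw [Finset.zero_subset]
    obtain ⟨a, ha⟩ := hA
    exact Finset.mem_sub.2 ⟨a, ha, a, ha, sub_self a⟩
  | succ L ih =>
    intro lam hl
    have hq' : (0 : ℤ) < q := by exact_mod_cast hq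
    have h1 := ih (fun i => (lam i).tdiv q) (fun i => by
      have := hl i
      rw [pow_succ] at this
      rw [Int.abs_eq_natAbs, Int.natAbs_tdiv]
      rw [Int.abs_eq_natAbs] at this
      have h3 : (lam i).natAbs < q ^ L * q := by exact_mod_cast this
      have h4 : (lam i).natAbs / q < q ^ L := (Nat.div_lt_iff_lt_mul hq).2 h3
      exact_mod_cast h4)
    obtain ⟨k, hk, h2⟩ := digit_cov hK hA hAK q (fun i => (lam i).tmod q) (fun i => by
      rw [Int.abs_eq_natAbs, Int.natAbs_tmod]
      exact_mod_cast Nat.mod_lt _ hq)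
    have h3 := (h2.add hK (h1.dil q)).trans hK (Cov.of_subset (K := K)
      (Finset.add_subset_add_left (dilate_nat_subset q (A - A))))
    rw [← iter_add] at h3
    refine (h3.trans hK (cov_iterD hA hAK _)).mono hK ?_ ?_
    · rw [dilate_sum, ← Finset.sum_add_distrib]
      refine sum_subset _ fun i _ => ?_
      rw [← dilate_mul]
      conv_lhs => rw [← Int.tmod_add_mul_tdiv (lam i) q]
      exact dilate_add_subset _ _ _
    · nlinarith [Nat.mul_le_mul hq hq, Nat.mul_le_mul hq (le_refl q)]

lemma main_card {A : Finset G} {K : ℝ} (hK : 1 ≤ K) (hA : A.Nonempty)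
    (hAK : ((A + A).card : ℝ) = K * A.card) {h : ℕ} (q : ℕ) (hq : 0 < q) (L : ℕ)
    (lam : Fin h → ℤ) (hl : ∀ i, |lam i| < (q : ℤ) ^ L) :
    ((∑ i, dilate (lam i) A).card : ℝ) ≤ K ^ (L * (h + 9 * q * q) + 2) * A.card := by
  obtain ⟨S, hS, hSX⟩ := main_cov hK hA hAK q hq L lam hl
  have hD : ((A - A).card : ℝ) ≤ K ^ 2 * A.card := by
    simpa [iter] using pr hA hAK 1 1
  calc ((∑ i, dilate (lam i) A).card : ℝ) ≤ (S + (A - A)).card := by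
        exact_mod_cast Finset.card_le_card hSX
    _ ≤ S.card * (A - A).card := by exact_mod_cast Finset.card_add_le
    _ ≤ K ^ (L * (h + 9 * q * q)) * (K ^ 2 * A.card) := by gcongr
    _ = _ := by ring

end

end SDil

/-- The earlier version of the main theorem (via Chung–Erdős–Spencer): there is a constant
`C > 0` and threshold `N` such that for positive integers `r, h` with `r + h ≥ N`, if
`|A+A| = K|A|` and the `λᵢ` are nonzero with `|λᵢ| ≤ 2^r`, then
`|λ₁·A + ⋯ + λ_h·A| ≤ K^(C(r+h)²/ln(r+h)) |A|`. -/
theorem sum_of_dilates_bound_squared :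
    ∃ C : ℝ, 0 < C ∧ ∃ N : ℕ, ∀ r h : ℕ, 0 < r → 0 < h → N ≤ r + h →
      ∀ (G : Type) (_ : AddCommGroup G) (_ : DecidableEq G)
        (A : Finset G) (K : ℝ) (lam : Fin h → ℤ),
        A.Nonempty →
        (∀ i, lam i ≠ 0) →
        (∀ i, |lam i| ≤ 2 ^ r) →
        ((A + A).card : ℝ) = K * A.card →
        ((∑ i, dilate (lam i) A).card : ℝ) ≤
          K ^ (C * (r + h : ℝ) ^ 2 / Real.log (r + h)) * A.card := by
  refine ⟨60, by norm_num, 16, ?_⟩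
  intro r h hr hh hN G _ _ A K lam hA _ hlam hAK
  have hc : (0 : ℝ) < A.card := by exact_mod_cast hA.card_pos
  have hK : 1 ≤ K := by
    have h1 : (A.card : ℝ) ≤ (A + A).card := by
      exact_mod_cast Finset.card_le_card_add_right hA
    rw [hAK] at h1
    by_contra hlt
    push Not at hlt
    nlinarith
  have hcast : ((r : ℝ) + h) = ((r + h : ℕ) : ℝ) := by push_cast; ring
  rw [hcast]
  obtain ⟨n, hn⟩ : ∃ n, n = r + h := ⟨_, rfl⟩
  rw [← hn] at hN ⊢
  have hnR : (16 : ℝ) ≤ n := by exact_mod_cast hN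
  have hlog : 0 < Real.log n := Real.log_pos (by linarith)
  have hlogn : Real.log n ≤ n := (Real.log_le_sub_one_of_pos (by linarith)).trans (by linarith)
  set q := Nat.sqrt n with hqdef
  have hq2 : q * q ≤ n := Nat.sqrt_le n
  have hq3 : n < (q + 1) * (q + 1) := Nat.lt_succ_sqrt n
  have hq4 : 4 ≤ q := Nat.le_sqrt.2 hN
  have hq5 : n ≤ q ^ 4 := by nlinarith [Nat.mul_le_mul hq4 hq4]
  have hlogq : Real.log n ≤ 4 * Real.log q := by
    have : Real.log n ≤ Real.log ((q : ℝ) ^ 4) :=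
      Real.log_le_log (by linarith) (by exact_mod_cast hq5)
    rwa [Real.log_pow] at this
  set x : ℝ := n / Real.log n with hx
  have hx1 : 1 ≤ x := (one_le_div hlog).2 hlogn
  have hxl : x * Real.log n = n := by rw [hx]; field_simp
  set L := ⌈4 * x⌉₊ with hL
  have hL1 : 4 * x ≤ L := Nat.le_ceil _
  have hL2 : (L : ℝ) < 4 * x + 1 := Nat.ceil_lt_add_one (by linarith)
  have hpow : (2 : ℝ) ^ r < (q : ℝ) ^ L := by
    have hq0 : (0 : ℝ) < q := by exact_mod_cast (by omega : 0 < q)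
    rw [← Real.log_lt_log_iff (by positivity) (by positivity), Real.log_pow, Real.log_pow]
    have h2 : Real.log 2 < 1 := by linarith [Real.log_two_lt_d9]
    have hrn : (r : ℝ) ≤ n := by exact_mod_cast (by omega : r ≤ n)
    have hr0 : (0 : ℝ) < r := by exact_mod_cast hr
    have : (n : ℝ) ≤ L * Real.log q := by
      calc (n : ℝ) = x * Real.log n := hxl.symm
        _ ≤ x * (4 * Real.log q) := by gcongr
        _ = (4 * x) * Real.log q := by ring
        _ ≤ L * Real.log q := by
          apply mul_le_mul_of_nonneg_right hL1
          linarith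
    nlinarith
  have hpowZ : (2 : ℤ) ^ r < (q : ℤ) ^ L := by exact_mod_cast hpow
  have key := SDil.main_card hK hA hAK q (by omega) L lam fun i => (hlam i).trans_lt hpowZ
  refine key.trans (mul_le_mul_of_nonneg_right ?_ hc.le)
  rw [← Real.rpow_natCast]
  apply Real.rpow_le_rpow_of_exponent_le hK
  have e : 60 * (n : ℝ) ^ 2 / Real.log n = 60 * n * x := by rw [hx]; ring
  rw [e]
  push_cast
  have hb : (h : ℝ) + 9 * q * q ≤ 10 * n := by
    have : h + 9 * q * q ≤ 10 * n := by nlinarith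
    exact_mod_cast this
  calc (L : ℝ) * (h + 9 * q * q) + 2 ≤ (5 * x) * (10 * n) + 2 := by
        gcongr
        linarith
    _ ≤ 60 * n * x := by nlinarith
end
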